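/- For every natural number k, the minimum, taken over all plays of the reversible pebble game on 2^k nodes that contain a configuration in which node 2^k is pebbled, of the maximum number of pebbled nodes occurring in any configuration of the play, is exactly k + 1. -/

import Mathlib

/- Bennett's reversible pebble game on `t` nodes numbered `1, …, t`.
A configuration is a finite set `P` of pebbled node indices (a subset of
`{1, …, t}`).  A legal move toggles the pebbled status of exactly one node
`j` with `1 ≤ j ≤ t`, provided `j = 1` or node `j - 1` is pebbled. -/
def PebbleMove (t : ℕ) (P P' : Finset ℕ) : Prop :=
  ∃ j : ℕ, 1 ≤ j ∧ j ≤ t ∧ (j = 1 ∨ j - 1 ∈ P) ∧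
    P' = (if j ∈ P then P.erase j else insert j P)

/-- A play is a finite sequence of configurations beginning with the empty
configuration, each consecutive pair related by a legal move. -/
def PebblePlay (t : ℕ) (L : List (Finset ℕ)) : Prop :=
  L.head? = some ∅ ∧ L.Chain' (PebbleMove t)

/-!
Moves are reversible, so reachability with at most `n` pebbles is symmetric.

Optimality: if `n` pebbles never reach node `b = 2 ^ n`, then `n + 1` pebbles never reach `2 * b`.
While there is a pebble above `b`, the pebbles on `1, …, b` number at most `n` and perform a play
that passed through a configuration containing `b`. By reversibility they can never all be removed,
so the nodes above `b` are played on with at most `n` pebbles, and the same bound applies to them.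

Attainability: with `k + 1` pebbles one pebbles node `2 ^ k` and leaves nothing else behind, by
pebbling the midpoint, pebbling the end from it, and running the first half backwards. Leaving a
pebble at each of the partial sums of the binary expansion of `x`, the most significant bit first,
reaches `x`.
-/

open Relation
open scoped Finset symmDiff

/-- A move of the pebble game played on the nodes `a + 1, …, t` only, whose first node `a + 1` may
always be toggled. The toggled node is written `i + 1`, so that its predecessor is `i`.
Configurations are not required to avoid the nodes outside the interval. -/
def IntervalMove (a t : ℕ) (P P' : Finset ℕ) : Prop :=
  ∃ i, a ≤ i ∧ i < t ∧ (i = a ∨ i ∈ P) ∧ P' = P ∆ {i + 1}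

/-- A move of the game on `a + 1, …, t` between configurations of at most `n` pebbles. Both ends are
bounded so that the relation is symmetric. -/
def BoundedMove (a t n : ℕ) (P P' : Finset ℕ) : Prop :=
  #P ≤ n ∧ #P' ≤ n ∧ IntervalMove a t P P'

/-- Reachability in the game on `a + 1, …, t` with at most `n` pebbles in play at any time. -/
abbrev BoundedReach (a t n : ℕ) : Finset ℕ → Finset ℕ → Prop :=
  ReflTransGen (BoundedMove a t n)

theorem filter_symmDiff {α : Type*} [DecidableEq α] (p : α → Prop) [DecidablePred p]
    (s t : Finset α) : (s ∆ t).filter p = s.filter p ∆ t.filter p := by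
  ext x
  simp only [Finset.mem_filter, Finset.mem_symmDiff]
  tauto

theorem symmDiff_singleton_eq_ite {α : Type*} [DecidableEq α] (s : Finset α) (x : α) :
    s ∆ {x} = if x ∈ s then s.erase x else insert x s := by
  split_ifs <;> grind [Finset.mem_symmDiff]

theorem card_filter_le_add_card_filter_lt {α : Type*} [LinearOrder α] (s : Finset α) (b : α) :
    #{x ∈ s | x ≤ b} + #{x ∈ s | b < x} = #s := by
  simpa only [not_le] using s.card_filter_add_card_filter_not (· ≤ b)

section Moves

variable {a b t n : ℕ} {P P' : Finset ℕ}

theorem pebbleMove_iff_intervalMove : PebbleMove t P P' ↔ IntervalMove 0 t P P' := by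
  simp only [PebbleMove, IntervalMove, symmDiff_singleton_eq_ite]
  constructor
  · rintro ⟨j, one_le_j, j_le_t, legal, rfl⟩
    obtain ⟨i, rfl⟩ := Nat.exists_eq_add_of_le' one_le_j
    exact ⟨i, i.zero_le, j_le_t, by simpa using legal, rfl⟩
  · rintro ⟨i, -, i_lt_t, legal, rfl⟩
    exact ⟨i + 1, by omega, i_lt_t, by simpa using legal, rfl⟩

theorem IntervalMove.symm (h : IntervalMove a t P P') : IntervalMove a t P' P := by
  obtain ⟨i, a_le_i, i_lt_t, legal, rfl⟩ := h
  refine ⟨i, a_le_i, i_lt_t, legal.imp_right fun i_mem => ?_, by simp⟩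
  simpa [Finset.mem_symmDiff] using i_mem

instance BoundedMove.stdSymm : Std.Symm (BoundedMove a t n) :=
  ⟨fun _ _ h => ⟨h.2.1, h.1, h.2.2.symm⟩⟩

theorem BoundedReach.symm (h : BoundedReach a t n P P') : BoundedReach a t n P' P :=
  ReflTransGen.stdSymm.symm _ _ h

theorem BoundedReach.card_le (h : BoundedReach a t n P P') (hP : #P ≤ n) : #P' ≤ n := by
  cases h with
  | refl => exact hP
  | tail _ last => exact last.2.1

theorem IntervalMove.filter_le_or_filter_lt (hab : a < b) (h : IntervalMove a t P P') :
    (IntervalMove a b {x ∈ P | x ≤ b} {x ∈ P' | x ≤ b} ∧ {x ∈ P' | b < x} = {x ∈ P | b < x}) ∨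
    (IntervalMove b t {x ∈ P | b < x} {x ∈ P' | b < x} ∧ {x ∈ P' | x ≤ b} = {x ∈ P | x ≤ b} ∧
      ({x ∈ P | b < x} = ∅ → b ∈ P)) := by
  obtain ⟨i, a_le_i, i_lt_t, legal, rfl⟩ := h
  rcases lt_or_ge i b with i_lt_b | b_le_i
  · refine .inl ⟨⟨i, a_le_i, i_lt_b, ?_, ?_⟩, ?_⟩
    · exact legal.imp_right fun i_mem => Finset.mem_filter.2 ⟨i_mem, i_lt_b.le⟩
    · rw [filter_symmDiff, Finset.filter_singleton, if_pos (by omega)]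
    · rw [filter_symmDiff, Finset.filter_singleton, if_neg (by omega), ← Finset.bot_eq_empty,
        symmDiff_bot]
  · have i_mem : i ∈ P := legal.resolve_left (by omega)
    have eq_or_mem : i = b ∨ i ∈ {x ∈ P | b < x} :=
      b_le_i.eq_or_lt'.imp_right fun b_lt_i => Finset.mem_filter.2 ⟨i_mem, b_lt_i⟩
    refine .inr ⟨⟨i, b_le_i, i_lt_t, eq_or_mem, ?_⟩, ?_, fun above_empty => ?_⟩
    · rw [filter_symmDiff, Finset.filter_singleton, if_pos (by omega)]
    · rw [filter_symmDiff, Finset.filter_singleton, if_neg (by omega), ← Finset.bot_eq_empty,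
        symmDiff_bot]
    · rw [above_empty] at eq_or_mem
      exact eq_or_mem.resolve_right (Finset.notMem_empty i) ▸ i_mem

end Moves

section LowerBound

variable {a b t n : ℕ} {P P' : Finset ℕ}

/-- The invariant of a play with `n + 1` pebbles under the assumption that `n` pebbles do not
suffice to pebble `b`: the part above `b` is reachable with `n` pebbles and, if it is nonempty, the
part up to `b` has evolved with `n` pebbles from a configuration containing `b`. -/
def SplitInvariant (a b t n : ℕ) (P : Finset ℕ) : Prop :=
  BoundedReach b t n ∅ {x ∈ P | b < x} ∧
    ({x ∈ P | b < x} ≠ ∅ → ∃ Q, b ∈ Q ∧ BoundedReach a b n Q {x ∈ P | x ≤ b})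

theorem SplitInvariant.step (hab : a < b) (hb : ∀ Q, BoundedReach a b n ∅ Q → b ∉ Q)
    (inv : SplitInvariant a b t n P) (h : BoundedMove a t (n + 1) P P') :
    SplitInvariant a b t n P' := by
  obtain ⟨reach_above, reach_below⟩ := inv
  obtain ⟨card_P, card_P', move⟩ := h
  rw [← card_filter_le_add_card_filter_lt _ b] at card_P card_P'
  rcases move.filter_le_or_filter_lt hab with
    ⟨move_below, above_eq⟩ | ⟨move_above, below_eq, b_mem_of_empty⟩
  · rw [SplitInvariant, above_eq]
    rw [above_eq] at card_P'
    refine ⟨reach_above, fun above_ne => ?_⟩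
    have above_pos := Finset.card_pos.2 (Finset.nonempty_iff_ne_empty.2 above_ne)
    obtain ⟨Q, b_mem, reach⟩ := reach_below above_ne
    exact ⟨Q, b_mem, reach.tail ⟨by omega, by omega, move_below⟩⟩
  · rw [SplitInvariant, below_eq]
    rw [below_eq] at card_P'
    have reach_below' : ∃ Q, b ∈ Q ∧ BoundedReach a b n Q {x ∈ P | x ≤ b} := by
      by_cases above_empty : {x ∈ P | b < x} = ∅
      · exact ⟨_, by simpa using b_mem_of_empty above_empty, .refl⟩
      · exact reach_below above_empty
    refine ⟨?_, fun _ => reach_below'⟩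
    have below_pos : 0 < #{x ∈ P | x ≤ b} := by
      obtain ⟨Q, b_mem, reach⟩ := reach_below'
      refine Finset.card_pos.2 (Finset.nonempty_iff_ne_empty.2 fun below_empty => ?_)
      rw [below_empty] at reach
      exact hb Q reach.symm b_mem
    exact reach_above.tail ⟨by omega, by omega, move_above⟩

theorem BoundedReach.filter_lt (hab : a < b) (hb : ∀ Q, BoundedReach a b n ∅ Q → b ∉ Q)
    (h : BoundedReach a t (n + 1) ∅ P) : BoundedReach b t n ∅ {x ∈ P | b < x} := by
  suffices inv : SplitInvariant a b t n P from inv.1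
  induction h with
  | refl => simp [SplitInvariant, ReflTransGen.refl]
  | tail _ move inv => exact inv.step hab hb move

theorem BoundedReach.lt_add_two_pow (h : BoundedReach a t n ∅ P) {x : ℕ} (hx : x ∈ P) :
    x < a + 2 ^ n := by
  induction n generalizing a t P x with
  | zero =>
    have P_empty : P = ∅ := by simpa using h.card_le (by simp)
    simp [P_empty] at hx
  | succ n ih =>
    have two_pow_pos : 0 < 2 ^ n := by positivity
    have reach_above : BoundedReach (a + 2 ^ n) t n ∅ {x ∈ P | a + 2 ^ n < x} :=
      h.filter_lt (by omega) fun Q reach mem => (ih reach mem).false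
    rw [pow_succ]
    rcases le_or_gt x (a + 2 ^ n) with x_le | lt_x
    · omega
    · have := ih reach_above (Finset.mem_filter.2 ⟨hx, lt_x⟩)
      omega

end LowerBound

section UpperBound

variable {a c t n : ℕ} {S : Finset ℕ}

theorem boundedReach_insert_succ (ha : a = c ∨ a ∈ S) (hca : c ≤ a) (hat : a < t)
    (hS : a + 1 ∉ S) (hn : #S < n) : BoundedReach c t n S (insert (a + 1) S) := by
  refine .single ⟨hn.le, ?_, a, hca, hat, ha, ?_⟩
  · rwa [Finset.card_insert_of_notMem hS]
  · rw [symmDiff_singleton_eq_ite, if_neg hS]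

theorem boundedReach_insert_add_two_pow (k : ℕ) (ha : a = c ∨ a ∈ S) (hca : c ≤ a)
    (hat : a + 2 ^ k ≤ t) (hS : Disjoint S (Finset.Ioc a (a + 2 ^ k))) (hn : #S + k < n) :
    BoundedReach c t n S (insert (a + 2 ^ k) S) := by
  induction k generalizing a S with
  | zero => exact boundedReach_insert_succ ha hca hat (by simpa using hS) hn
  | succ k ih =>
    have two_pow_pos : 0 < 2 ^ k := by positivity
    rw [show a + 2 ^ (k + 1) = a + 2 ^ k + 2 ^ k by ring] at hat hS ⊢
    set mid := a + 2 ^ k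
    have card_mid := Finset.card_insert_le mid S
    have card_end := Finset.card_insert_le (mid + 2 ^ k) S
    have disjoint_left : Disjoint S (Finset.Ioc a mid) :=
      hS.mono_right (Finset.Ioc_subset_Ioc_right (by omega))
    have disjoint_right : Disjoint S (Finset.Ioc mid (mid + 2 ^ k)) :=
      hS.mono_right (Finset.Ioc_subset_Ioc_left (by omega))
    have pebble_mid : BoundedReach c t n S (insert mid S) :=
      ih ha hca (by omega) disjoint_left (by omega)
    have pebble_end : BoundedReach c t n (insert mid S) (insert (mid + 2 ^ k) (insert mid S)) :=
      ih (by simp) (by omega) hat (by simpa using disjoint_right) (by omega)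
    have pebble_mid_with_end :
        BoundedReach c t n (insert (mid + 2 ^ k) S) (insert mid (insert (mid + 2 ^ k) S)) :=
      ih (ha.imp_right Finset.mem_insert_of_mem) hca (by omega)
        (Finset.disjoint_insert_left.2 ⟨by simp only [Finset.mem_Ioc]; omega, disjoint_left⟩)
        (by omega)
    rw [Finset.insert_comm] at pebble_mid_with_end
    exact (pebble_mid.trans pebble_end).trans pebble_mid_with_end.symm

theorem exists_boundedReach_mem {m x : ℕ} (ha : a = c ∨ a ∈ S) (hca : c ≤ a)
    (hax : a < x) (hxt : x ≤ t) (hxm : x < a + 2 ^ m)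
    (hS : Disjoint S (Finset.Ioc a x)) (hn : #S + m ≤ n) :
    ∃ P, BoundedReach c t n S P ∧ x ∈ P := by
  induction m generalizing a S with
  | zero => omega
  | succ m ih =>
    rcases lt_or_ge x (a + 2 ^ m) with x_lt | le_x
    · exact ih ha hca hax x_lt hS (by omega)
    have pebble_mid : BoundedReach c t n S (insert (a + 2 ^ m) S) :=
      boundedReach_insert_add_two_pow m ha hca (by omega)
        (hS.mono_right (Finset.Ioc_subset_Ioc_right le_x)) (by omega)
    rcases le_x.eq_or_lt with rfl | lt_x
    · exact ⟨_, pebble_mid, Finset.mem_insert_self _ _⟩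
    have disjoint_right : Disjoint S (Finset.Ioc (a + 2 ^ m) x) :=
      hS.mono_right (Finset.Ioc_subset_Ioc_left (by omega))
    have card_mid := Finset.card_insert_le (a + 2 ^ m) S
    rw [pow_succ] at hxm
    obtain ⟨P, reach, x_mem⟩ := ih (S := insert (a + 2 ^ m) S) (by simp) (by omega) lt_x
      (by omega) (by simpa using disjoint_right) (by omega)
    exact ⟨P, pebble_mid.trans reach, x_mem⟩

end UpperBound

section Plays

variable {t n : ℕ}

theorem pebblePlay_and_card_le_iff {L : List (Finset ℕ)} :
    (PebblePlay t L ∧ ∀ P ∈ L, #P ≤ n) ↔ L.head? = some ∅ ∧ L.IsChain (BoundedMove 0 t n) := by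
  constructor
  · rintro ⟨⟨head_eq, chain⟩, card_le⟩
    exact ⟨head_eq, chain.imp_of_mem_imp fun P P' hP hP' move =>
      ⟨card_le P hP, card_le P' hP', pebbleMove_iff_intervalMove.1 move⟩⟩
  · rintro ⟨head_eq, chain⟩
    refine ⟨⟨head_eq, chain.imp fun _ _ move => pebbleMove_iff_intervalMove.2 move.2.2⟩, ?_⟩
    refine chain.induction (#· ≤ n) L (fun _ _ move _ => move.2.1) fun L_ne => ?_
    simp [(List.head_eq_iff_head?_eq_some L_ne).2 head_eq]

theorem exists_pebblePlay_iff_boundedReach {P : Finset ℕ} :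
    (∃ L, PebblePlay t L ∧ P ∈ L ∧ ∀ Q ∈ L, #Q ≤ n) ↔ BoundedReach 0 t n ∅ P := by
  constructor
  · rintro ⟨L, play, P_mem, card_le⟩
    obtain ⟨head_eq, chain⟩ := pebblePlay_and_card_le_iff.1 ⟨play, card_le⟩
    refine chain.induction (BoundedReach 0 t n ∅) L (fun _ _ move reach => reach.tail move)
      (fun L_ne => ?_) P P_mem
    rw [(List.head_eq_iff_head?_eq_some L_ne).2 head_eq]
  · intro reach
    obtain ⟨L, chain, rfl⟩ := List.exists_isChain_cons_of_relationReflTransGen reach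
    obtain ⟨play, card_le⟩ := pebblePlay_and_card_le_iff.2 ⟨List.head?_cons, chain⟩
    exact ⟨∅ :: L, play, List.getLast_mem _, card_le⟩

theorem exists_boundedReach_mem_iff {x : ℕ} (hx : 0 < x) (hxt : x ≤ t) :
    (∃ P, BoundedReach 0 t n ∅ P ∧ x ∈ P) ↔ x.size ≤ n := by
  rw [Nat.size_le]
  constructor
  · rintro ⟨P, reach, x_mem⟩
    simpa using reach.lt_add_two_pow x_mem
  · intro x_lt
    exact exists_boundedReach_mem (.inl rfl) le_rfl hx hxt (by simpa using x_lt) (by simp) (by simp)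

end Plays

theorem pebble_game_optimal_pebbles_general {t x : ℕ} (hx : 0 < x) (hxt : x ≤ t) :
    IsLeast {m : ℕ | ∃ L : List (Finset ℕ), PebblePlay t L ∧
        (∃ P ∈ L, x ∈ P) ∧ ∀ P ∈ L, P.card ≤ m} x.size := by
  have play_iff (m : ℕ) : (∃ L : List (Finset ℕ), PebblePlay t L ∧
      (∃ P ∈ L, x ∈ P) ∧ ∀ P ∈ L, #P ≤ m) ↔ x.size ≤ m := by
    rw [← exists_boundedReach_mem_iff hx hxt]
    simp only [← exists_pebblePlay_iff_boundedReach]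
    grind
  simp only [play_iff]
  exact isLeast_Ici

/-- The minimum, over all plays of the reversible pebble game on `2 ^ k` nodes
containing a configuration in which node `2 ^ k` is pebbled, of the maximum
number of pebbled nodes in any configuration of the play, is exactly `k + 1`.
This is expressed as: `k + 1` is the least `m` such that some play pebbling
node `2 ^ k` keeps every configuration's cardinality at most `m`. -/
theorem pebble_game_optimal_pebbles (k : ℕ) :
    IsLeast {m : ℕ | ∃ L : List (Finset ℕ), PebblePlay (2 ^ k) L ∧
        (∃ P ∈ L, 2 ^ k ∈ P) ∧ ∀ P ∈ L, P.card ≤ m} (k + 1) := by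
  simpa only [Nat.size_pow] using
    pebble_game_optimal_pebbles_general (t := 2 ^ k) (Nat.two_pow_pos k) le_rfl
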